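/- Let (X_t)_{t∈T} be a family of nonempty separable metrizable topological spaces and X = ∏_{t∈T} X_t. Then every functionally measurable subset of X is α-embedded in X for every 0 ≤ α < ω₁. -/

import Mathlib

/-!
Call a set Gδ-open if it is a union of Gδ-sets. Every functionally measurable set is Gδ-open, and a
relatively functionally closed subset `B` of a Gδ-open set `E` is again Gδ-open in the whole space.
The point is that the closure of a Gδ-open subset `A` of a product of second countable spaces is a
cylinder over countably many coordinates. Each `a ∈ A` has a countable set `c a` of coordinates
such that every point that agrees with `a` on `c a` lies in `A`. Closing off, one finds a countable
set `S` of coordinates such that on every finite subproduct of `∏_{t ∈ S} X t` the projection of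
`{a ∈ A | c a ⊆ S}` is dense in that of `A`. The union of the cylinders over `S` through the points
`a ∈ A` with `c a ⊆ S` is contained in `A` and dense in `A`, so it has the same closure as `A`.

If the factors are moreover regular, then `∏_{t ∈ S} X t` is pseudometrizable, so the closure of `B`
is functionally closed; its trace on `E` is `B`. This is the case `α = 0`, and the other classes
are obtained from it by countable unions and intersections.
-/

open Set Topology

/-- A topological space is pseudo-ℵ₁-compact if every locally finite family of
(pairwise distinct) nonempty open subsets is at most countable. -/
def PseudoAleph1Compact (Z : Type*) [TopologicalSpace Z] : Prop :=
  ∀ 𝒰 : Set (Set Z), (∀ U ∈ 𝒰, IsOpen U) → (∀ U ∈ 𝒰, U.Nonempty) →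
    LocallyFinite (fun U : 𝒰 => (U : Set Z)) → 𝒰.Countable

/-- `A` is functionally closed in `Z` if it is the zero set of a continuous real function. -/
def FunctionallyClosed {Z : Type*} [TopologicalSpace Z] (A : Set Z) : Prop :=
  ∃ f : Z → ℝ, Continuous f ∧ A = f ⁻¹' {0}

/-- `A` is functionally open in `Z` if its complement is functionally closed. -/
def FunctionallyOpen {Z : Type*} [TopologicalSpace Z] (A : Set Z) : Prop :=
  FunctionallyClosed Aᶜ

/-- `FunClass Z true α A` : `A` is of the functionally additive class `α` in `Z`;
`FunClass Z false α A` : `A` is of the functionally multiplicative class `α` in `Z`. -/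
inductive FunClass (Z : Type*) [TopologicalSpace Z] : Bool → Ordinal.{0} → Set Z → Prop
  | open_ (A : Set Z) (h : FunctionallyOpen A) : FunClass Z true 0 A
  | closed_ (A : Set Z) (h : FunctionallyClosed A) : FunClass Z false 0 A
  | union (α : Ordinal.{0}) (A : ℕ → Set Z) (β : ℕ → Ordinal.{0}) (hα : α ≠ 0)
      (hβ : ∀ n, β n < α) (h : ∀ n, FunClass Z false (β n) (A n)) :
      FunClass Z true α (⋃ n, A n)
  | inter (α : Ordinal.{0}) (A : ℕ → Set Z) (β : ℕ → Ordinal.{0}) (hα : α ≠ 0)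
      (hβ : ∀ n, β n < α) (h : ∀ n, FunClass Z true (β n) (A n)) :
      FunClass Z false α (⋂ n, A n)

/-- `A` is α-embedded in `Z` if every subset of `A` of functionally multiplicative class `α`
in the subspace `A` is the trace on `A` of a set of functionally multiplicative class `α` in `Z`. -/
def IsAlphaEmbedded {Z : Type*} [TopologicalSpace Z] (α : Ordinal.{0}) (A : Set Z) : Prop :=
  ∀ B : Set Z, B ⊆ A → FunClass ↥A false α (Subtype.val ⁻¹' B) →
    ∃ C : Set Z, FunClass Z false α C ∧ C ∩ A = B

/-- `Z` is α-universal if every subset of `Z` is α-embedded in `Z`. -/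
def AlphaUniversal (Z : Type*) [TopologicalSpace Z] (α : Ordinal.{0}) : Prop :=
  ∀ A : Set Z, IsAlphaEmbedded α A

/-- The projection of the product `∀ t, X t` onto the coordinates in `S`. -/
def proj {T : Type*} {X : T → Type*} (S : Set T) (x : ∀ t, X t) : ∀ t : S, X t.1 :=
  fun t => x t.1

/-- A functionally measurable (Baire) set: a member of some functionally additive or
multiplicative class `α` with `α < ω₁`. -/
def FunctionallyMeasurable {Z : Type*} [TopologicalSpace Z] (A : Set Z) : Prop :=
  ∃ (b : Bool) (β : Ordinal.{0}), β < (Cardinal.aleph 1).ord ∧ FunClass Z b β A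

/-- `Y` has a regular `Gδ`-diagonal. -/
def RegularGDeltaDiagonal (Y : Type*) [TopologicalSpace Y] : Prop :=
  ∃ G : ℕ → Set (Y × Y), (∀ n, IsOpen (G n)) ∧
    {p : Y × Y | p.1 = p.2} = ⋂ n, G n ∧
    {p : Y × Y | p.1 = p.2} = ⋂ n, closure (G n)

section General

variable {Z : Type*} [TopologicalSpace Z]

lemma FunctionallyClosed.isClosed {A : Set Z} (hA : FunctionallyClosed A) : IsClosed A := by
  obtain ⟨f, hf, rfl⟩ := hA
  exact isClosed_singleton.preimage hf

lemma FunctionallyClosed.isGδ {A : Set Z} (hA : FunctionallyClosed A) : IsGδ A := by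
  obtain ⟨f, hf, rfl⟩ := hA
  exact isClosed_singleton.isGδ.preimage hf

lemma FunctionallyClosed.preimage {Y : Type*} [TopologicalSpace Y] {A : Set Y}
    (hA : FunctionallyClosed A) {g : Z → Y} (hg : Continuous g) :
    FunctionallyClosed (g ⁻¹' A) := by
  obtain ⟨f, hf, rfl⟩ := hA
  exact ⟨f ∘ g, hf.comp hg, rfl⟩

lemma FunctionallyClosed.of_isClosed [PerfectlyNormalSpace Z] {A : Set Z} (hA : IsClosed A) :
    FunctionallyClosed A :=
  let ⟨f, hf, _⟩ := perfectlyNormalSpace_iff_forall_isClosed_preimage_zero.1 ‹_› A hA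
  ⟨f, f.continuous, hf⟩

lemma FunctionallyOpen.isOpen {A : Set Z} (hA : FunctionallyOpen A) : IsOpen A :=
  isClosed_compl_iff.1 hA.isClosed

/-- `A` is Gδ-open if it is a union of Gδ-sets, i.e. open in the topology generated by the
Gδ-sets (the P-space coreflection) of `Z`. -/
def IsGδOpen (A : Set Z) : Prop :=
  ∀ x ∈ A, ∃ G, IsGδ G ∧ x ∈ G ∧ G ⊆ A

namespace IsGδOpen

lemma of_isGδ {A : Set Z} (hA : IsGδ A) : IsGδOpen A :=
  fun _ hx => ⟨A, hA, hx, Subset.rfl⟩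

lemma iUnion {ι : Sort*} {A : ι → Set Z} (hA : ∀ i, IsGδOpen (A i)) : IsGδOpen (⋃ i, A i) := by
  intro x hx
  obtain ⟨i, hxi⟩ := mem_iUnion.1 hx
  obtain ⟨G, hG, hxG, hGA⟩ := hA i x hxi
  exact ⟨G, hG, hxG, hGA.trans (subset_iUnion A i)⟩

lemma iInter {ι : Sort*} [Countable ι] {A : ι → Set Z} (hA : ∀ i, IsGδOpen (A i)) :
    IsGδOpen (⋂ i, A i) := by
  intro x hx
  choose G hG hxG hGA using fun i => hA i x (mem_iInter.1 hx i)
  exact ⟨⋂ i, G i, .iInter hG, mem_iInter.2 hxG, iInter_mono hGA⟩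

lemma image_val {E : Set Z} (hE : IsGδOpen E) {B : Set E} (hB : IsGδOpen B) :
    IsGδOpen (Subtype.val '' B) := by
  rintro _ ⟨x, hxB, rfl⟩
  obtain ⟨G, hG, hxG, hGE⟩ := hE x x.2
  obtain ⟨H, hH, hxH, hHB⟩ := hB x hxB
  obtain ⟨V, hV, rfl⟩ := isGδ_iff_eq_iInter_nat.1 hH
  choose W hW hWV using fun n => isOpen_induced_iff.1 (hV n)
  simp only [← hWV, mem_iInter, mem_preimage] at hxH
  refine ⟨G ∩ ⋂ n, W n, hG.inter (.iInter_of_isOpen hW), ⟨hxG, mem_iInter.2 hxH⟩, ?_⟩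
  rintro y ⟨hyG, hyW⟩
  refine ⟨⟨y, hGE hyG⟩, hHB ?_, rfl⟩
  simpa only [← hWV, mem_iInter, mem_preimage] using hyW

end IsGδOpen

lemma FunClass.isGδOpen {b : Bool} {α : Ordinal.{0}} {A : Set Z} (hA : FunClass Z b α A) :
    IsGδOpen A := by
  induction hA with
  | open_ A h => exact .of_isGδ h.isOpen.isGδ
  | closed_ A h => exact .of_isGδ h.isGδ
  | union _ _ _ _ _ _ ih => exact .iUnion ih
  | inter _ _ _ _ _ _ ih => exact .iInter ih

lemma FunctionallyMeasurable.isGδOpen {A : Set Z} (hA : FunctionallyMeasurable A) :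
    IsGδOpen A :=
  let ⟨_, _, _, h⟩ := hA
  h.isGδOpen

/-- `E` is z-embedded in `Z` if every functionally closed subset of the subspace `E` is the trace
on `E` of a functionally closed subset of `Z`. -/
def IsZEmbedded (E : Set Z) : Prop :=
  ∀ B : Set E, FunctionallyClosed B → ∃ C : Set Z, FunctionallyClosed C ∧ Subtype.val ⁻¹' C = B

lemma IsZEmbedded.exists_funClass_preimage_val_eq {E : Set Z} (hE : IsZEmbedded E) {b : Bool}
    {α : Ordinal.{0}} {B : Set E} (hB : FunClass E b α B) :
    ∃ C : Set Z, FunClass Z b α C ∧ Subtype.val ⁻¹' C = B := by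
  induction hB with
  | open_ B h =>
    obtain ⟨C, hC, hCB⟩ := hE Bᶜ h
    have hC' : FunctionallyOpen Cᶜ := by rwa [FunctionallyOpen, compl_compl]
    exact ⟨Cᶜ, .open_ _ hC', by rw [preimage_compl, hCB, compl_compl]⟩
  | closed_ B h =>
    obtain ⟨C, hC, hCB⟩ := hE B h
    exact ⟨C, .closed_ C hC, hCB⟩
  | union α B β hα hβ _ ih =>
    choose C hC hCB using ih
    exact ⟨⋃ n, C n, .union α C β hα hβ hC, by simp only [preimage_iUnion, hCB]⟩
  | inter α B β hα hβ _ ih =>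
    choose C hC hCB using ih
    exact ⟨⋂ n, C n, .inter α C β hα hβ hC, by simp only [preimage_iInter, hCB]⟩

lemma IsZEmbedded.isAlphaEmbedded {E : Set Z} (hE : IsZEmbedded E) (α : Ordinal.{0}) :
    IsAlphaEmbedded α E := by
  intro B hBE hB
  obtain ⟨C, hC, hCB⟩ := hE.exists_funClass_preimage_val_eq hB
  refine ⟨C, hC, ?_⟩
  rw [inter_comm, (Subtype.preimage_val_eq_preimage_val_iff E C B).1 hCB, inter_eq_right.2 hBE]

end General

lemma secondCountableTopology_of_separableSpace (Y : Type*) [TopologicalSpace Y]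
    [TopologicalSpace.SeparableSpace Y] [TopologicalSpace.PseudoMetrizableSpace Y] :
    SecondCountableTopology Y := by
  let := TopologicalSpace.pseudoMetrizableSpacePseudoMetric Y
  exact UniformSpace.secondCountable_of_separable Y

lemma exists_countable_subset_image_subset_closure {ι Y : Type*} [TopologicalSpace Y]
    [SecondCountableTopology Y] (f : ι → Y) (A : Set ι) :
    ∃ D ⊆ A, D.Countable ∧ f '' A ⊆ closure (f '' D) := by
  obtain ⟨Q, hQ, hQd⟩ := TopologicalSpace.exists_countable_dense (f '' A)
  have hQA : SurjOn f A (Subtype.val '' Q) := Subtype.coe_image_subset _ Q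
  obtain ⟨D, hDA, hDinj, hDQ⟩ := hQA.exists_subset_injOn_image_eq
  refine ⟨D, hDA, countable_of_injective_of_countable_image hDinj ?_, ?_⟩
  · exact hDQ ▸ hQ.image _
  · exact hDQ ▸ Subtype.dense_iff.1 hQd

lemma exists_countable_forall_finset_subset {T : Type*} {g : Finset T → Set T}
    (hg : ∀ F, (g F).Countable) :
    ∃ S : Set T, S.Countable ∧ ∀ F : Finset T, ↑F ⊆ S → g F ⊆ S := by
  let enlarge (R : Set T) : Set T := R ∪ ⋃ F ∈ {F : Finset T | ↑F ⊆ R}, g F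
  let R (n : ℕ) : Set T := enlarge^[n] ∅
  have R_succ (n : ℕ) : R (n + 1) = enlarge (R n) := Function.iterate_succ_apply' enlarge n ∅
  have R_mono : Monotone R := monotone_nat_of_le_succ fun n => by
    rw [R_succ]
    exact subset_union_left
  have enlarge_countable {R : Set T} (hR : R.Countable) : (enlarge R).Countable := by
    have hfin : {F : Finset T | ↑F ⊆ R}.Countable := by
      simpa using (countable_ofPred_finite_subset hR).preimage Finset.coe_injective
    exact hR.union (hfin.biUnion fun F _ => hg F)
  have R_countable (n : ℕ) : (R n).Countable := by
    induction n with
    | zero => exact countable_empty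
    | succ n ih => exact R_succ n ▸ enlarge_countable ih
  refine ⟨⋃ n, R n, countable_iUnion R_countable, fun F hF => ?_⟩
  obtain ⟨n, hn⟩ := R_mono.directed_le.exists_mem_subset_of_finset_subset_biUnion hF
  calc g F ⊆ enlarge (R n) := (subset_biUnion_of_mem (u := g) hn).trans subset_union_right
    _ = R (n + 1) := (R_succ n).symm
    _ ⊆ ⋃ n, R n := subset_iUnion R (n + 1)

section Product

variable {T : Type*} {X : T → Type*} [∀ t, TopologicalSpace (X t)]

lemma continuous_proj (S : Set T) : Continuous (proj (X := X) S) :=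
  continuous_pi fun t => continuous_apply t.1

lemma isOpenMap_proj (S : Set T) : IsOpenMap (proj (X := X) S) := by
  classical
  exact isOpenMap_fst.comp (Homeomorph.piEquivPiSubtypeProd (· ∈ S) X).isOpenMap

lemma IsGδOpen.exists_countable_cylinder_subset {A : Set (∀ t, X t)} (hA : IsGδOpen A)
    {x : ∀ t, X t} (hx : x ∈ A) :
    ∃ S : Set T, S.Countable ∧ proj S ⁻¹' {proj S x} ⊆ A := by
  obtain ⟨G, hG, hxG, hGA⟩ := hA x hx
  obtain ⟨V, hV, rfl⟩ := isGδ_iff_eq_iInter_nat.1 hG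
  choose F U hU hUV using fun n => isOpen_pi_iff.1 (hV n) x (mem_iInter.1 hxG n)
  refine ⟨⋃ n, F n, countable_iUnion fun n => (F n).countable_toSet, fun y hy => ?_⟩
  refine hGA (mem_iInter.2 fun n => hUV n fun t ht => ?_)
  have hyx : y t = x t := congrFun hy ⟨t, mem_iUnion.2 ⟨n, ht⟩⟩
  exact hyx ▸ (hU n t ht).2

lemma mem_closure_cylinder_of_forall_finset {S : Set T} {D : Set (∀ t, X t)} {x : ∀ t, X t}
    (h : ∀ F : Finset T, ↑F ⊆ S → proj (F : Set T) x ∈ closure (proj (F : Set T) '' D)) :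
    x ∈ closure (proj S ⁻¹' (proj S '' D)) := by
  classical
  refine mem_closure_iff.2 fun W hW hxW => ?_
  obtain ⟨F, U, hU, hUW⟩ := isOpen_pi_iff.1 hW x hxW
  let F' : Finset T := F.filter (· ∈ S)
  have hF' (t : T) (ht : t ∈ F') : t ∈ F ∧ t ∈ S := Finset.mem_filter.1 ht
  let V : Set (∀ t : (F' : Set T), X t) := univ.pi fun t => U t
  have hV : IsOpen V := isOpen_set_pi finite_univ fun t _ => (hU t (hF' t t.2).1).1
  have hxV : proj (F' : Set T) x ∈ V := fun t _ => (hU t (hF' t t.2).1).2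
  obtain ⟨_, hdV, d, hdD, rfl⟩ :=
    mem_closure_iff.1 (h F' fun t ht => (hF' t ht).2) V hV hxV
  refine ⟨S.piecewise d x, hUW fun t ht => ?_, d, hdD, ?_⟩
  · by_cases htS : t ∈ S
    · rw [piecewise_eq_of_mem _ _ _ htS]
      exact hdV ⟨t, Finset.mem_filter.2 ⟨ht, htS⟩⟩ trivial
    · rw [piecewise_eq_of_notMem _ _ _ htS]
      exact (hU t ht).2
  · ext t
    exact (piecewise_eq_of_mem S d x t.2).symm

lemma IsGδOpen.exists_countable_closure_eq_cylinder [∀ t, SecondCountableTopology (X t)]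
    {A : Set (∀ t, X t)} (hA : IsGδOpen A) :
    ∃ S : Set T, S.Countable ∧ ∃ C, IsClosed C ∧ closure A = proj S ⁻¹' C := by
  choose! c hc hcA using fun x (hx : x ∈ A) => hA.exists_countable_cylinder_subset hx
  choose D hDA hD hAD using fun F : Finset T =>
    exists_countable_subset_image_subset_closure (proj (F : Set T)) A
  obtain ⟨S, hS, hDS⟩ := exists_countable_forall_finset_subset
    (g := fun F => ⋃ d ∈ D F, c d) fun F => (hD F).biUnion fun d hd => hc d (hDA F hd)
  let D' : Set (∀ t, X t) := {d ∈ A | c d ⊆ S}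
  have hDD' (F : Finset T) (hF : ↑F ⊆ S) : D F ⊆ D' := fun d hd =>
    ⟨hDA F hd, (subset_biUnion_of_mem (u := c) hd).trans (hDS F hF)⟩
  have cylinder_subset : proj S ⁻¹' (proj S '' D') ⊆ A := by
    rintro y ⟨d, ⟨hdA, hcd⟩, hdy⟩
    exact hcA d hdA (funext fun t => (congrFun hdy ⟨t, hcd t.2⟩).symm)
  have subset_closure_cylinder : A ⊆ closure (proj S ⁻¹' (proj S '' D')) := fun x hx =>
    mem_closure_cylinder_of_forall_finset fun F hF =>
      closure_mono (image_mono (hDD' F hF)) (hAD F (mem_image_of_mem _ hx))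
  refine ⟨S, hS, closure (proj S '' D'), isClosed_closure, ?_⟩
  rw [(isOpenMap_proj S).preimage_closure_eq_closure_preimage (continuous_proj S)]
  exact (closure_minimal subset_closure_cylinder isClosed_closure).antisymm
    (closure_mono cylinder_subset)

variable [∀ t, RegularSpace (X t)] [∀ t, SecondCountableTopology (X t)]

lemma IsGδOpen.functionallyClosed_closure {A : Set (∀ t, X t)} (hA : IsGδOpen A) :
    FunctionallyClosed (closure A) := by
  obtain ⟨S, hS, C, hC, hAC⟩ := hA.exists_countable_closure_eq_cylinder
  have := hS.to_subtype
  exact hAC ▸ (FunctionallyClosed.of_isClosed hC).preimage (continuous_proj S)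

lemma IsGδOpen.isZEmbedded {E : Set (∀ t, X t)} (hE : IsGδOpen E) : IsZEmbedded E := by
  intro B hB
  refine ⟨closure (Subtype.val '' B), ?_, ?_⟩
  · exact (hE.image_val (.of_isGδ hB.isGδ)).functionallyClosed_closure
  · rw [← IsInducing.subtypeVal.closure_eq_preimage_closure_image, hB.isClosed.closure_eq]

end Product

theorem statement11_general {T : Type*} {X : T → Type*} [∀ t, TopologicalSpace (X t)]
    [∀ t, RegularSpace (X t)] [∀ t, SecondCountableTopology (X t)]
    {E : Set (∀ t, X t)} (hE : IsGδOpen E) (α : Ordinal.{0}) : IsAlphaEmbedded α E :=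
  hE.isZEmbedded.isAlphaEmbedded α

/-- in a product of separable metrizable spaces every functionally
measurable set is α-embedded for every α < ω₁. -/
theorem statement11 {T : Type u} {X : T → Type v} [∀ t, TopologicalSpace (X t)]
    [∀ t, Nonempty (X t)] [∀ t, TopologicalSpace.SeparableSpace (X t)]
    [∀ t, TopologicalSpace.MetrizableSpace (X t)]
    (E : Set (∀ t, X t)) (hE : FunctionallyMeasurable E)
    (α : Ordinal.{0}) (hα : α < (Cardinal.aleph 1).ord) :
    IsAlphaEmbedded α E := by
  have (t : T) : SecondCountableTopology (X t) := secondCountableTopology_of_separableSpace (X t)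
  exact statement11_general hE.isGδOpen α
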